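/- For all integers n, d, r with n ≤ d ≤ r ≤ R_typ-max(n,d,n), there exist matrices A, C ∈ ℝ^{n×r}, B ∈ ℝ^{d×r} and a vector h₀ ∈ ℝ^n such that rank_CP([[A,B,C]]) = r and rank(B diag(Aᵀh₀) Cᵀ) = rank(tanh(B diag(Aᵀh₀) Cᵀ)) = n, where tanh is applied entrywise to the matrix and diag(v) denotes the diagonal matrix with diagonal v. -/

import Mathlib

open Matrix MeasureTheory

noncomputable section

/-- The CP tensor `[[A,B,C]]`. -/
def cpT {d1 d2 d3 R : ℕ} (A : Matrix (Fin d1) (Fin R) ℝ) (B : Matrix (Fin d2) (Fin R) ℝ)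
    (C : Matrix (Fin d3) (Fin R) ℝ) : Fin d1 → Fin d2 → Fin d3 → ℝ :=
  fun i j k => ∑ r, A i r * B j r * C k r

/-- `(T ×₁ u ×₂ v)` for a third order tensor `T`. -/
def modeProd {d1 d2 d3 : ℕ} (T : Fin d1 → Fin d2 → Fin d3 → ℝ) (u : Fin d1 → ℝ)
    (v : Fin d2 → ℝ) : Fin d3 → ℝ :=
  fun k => ∑ i, ∑ j, T i j k * u i * v j

/-- The CP rank of a tensor: the minimal `R` admitting a rank-`R` CP decomposition. -/
def cprank {d1 d2 d3 : ℕ} (T : Fin d1 → Fin d2 → Fin d3 → ℝ) : ℕ :=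
  sInf {R : ℕ | ∃ (A : Matrix (Fin d1) (Fin R) ℝ) (B : Matrix (Fin d2) (Fin R) ℝ)
    (C : Matrix (Fin d3) (Fin R) ℝ), T = cpT A B C}

/-- The maximal CP rank of tensors in `ℝ^{d1×d2×d3}`. -/
def Rmax (d1 d2 d3 : ℕ) : ℕ :=
  sSup {r : ℕ | ∃ T : Fin d1 → Fin d2 → Fin d3 → ℝ, cprank T = r}

/-- `R` is a typical rank if the set of tensors of CP rank `R` has positive Lebesgue measure. -/
def IsTypicalRank (d1 d2 d3 R : ℕ) : Prop :=
  0 < volume {T : Fin d1 → Fin d2 → Fin d3 → ℝ | cprank T = R}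

/-- The maximal typical CP rank. -/
def RtypMax (d1 d2 d3 : ℕ) : ℕ := sSup {R : ℕ | IsTypicalRank d1 d2 d3 R}

/-- Hidden states of a CPRNN; `x t` is the input at time `t+1`. -/
def cprnnStates {n d R : ℕ} (σ : ℝ → ℝ) (h0 : Fin n → ℝ)
    (A : Matrix (Fin n) (Fin R) ℝ) (B : Matrix (Fin d) (Fin R) ℝ) (C : Matrix (Fin n) (Fin R) ℝ)
    (U : Matrix (Fin n) (Fin d) ℝ) (V : Matrix (Fin n) (Fin n) ℝ) (b : Fin n → ℝ)
    (x : ℕ → Fin d → ℝ) : ℕ → Fin n → ℝ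
  | 0 => h0
  | t + 1 => fun k =>
      σ (modeProd (cpT A B C) (cprnnStates σ h0 A B C U V b x t) (x t) k
        + V.mulVec (cprnnStates σ h0 A B C U V b x t) k + U.mulVec (x t) k + b k)

/-- Hidden states of a CPBIRNN (second-order term only). -/
def cpbirnnStates {n d R : ℕ} (σ : ℝ → ℝ) (h0 : Fin n → ℝ)
    (A : Matrix (Fin n) (Fin R) ℝ) (B : Matrix (Fin d) (Fin R) ℝ) (C : Matrix (Fin n) (Fin R) ℝ)
    (x : ℕ → Fin d → ℝ) : ℕ → Fin n → ℝ
  | 0 => h0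
  | t + 1 => fun k =>
      σ (modeProd (cpT A B C) (cpbirnnStates σ h0 A B C x t) (x t) k)

/-- Hidden states of a 2RNN with arbitrary second-order tensor. -/
def rnn2States {n d : ℕ} (σ : ℝ → ℝ) (h0 : Fin n → ℝ) (T : Fin n → Fin d → Fin n → ℝ)
    (U : Matrix (Fin n) (Fin d) ℝ) (V : Matrix (Fin n) (Fin n) ℝ) (b : Fin n → ℝ)
    (x : ℕ → Fin d → ℝ) : ℕ → Fin n → ℝ
  | 0 => h0
  | t + 1 => fun k =>
      σ (modeProd T (rnn2States σ h0 T U V b x t) (x t) k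
        + V.mulVec (rnn2States σ h0 T U V b x t) k + U.mulVec (x t) k + b k)

/-- Hidden states of a MIRNN. -/
def mirnnStates {n d : ℕ} (σ : ℝ → ℝ) (h0 α β1 β2 b : Fin n → ℝ)
    (U : Matrix (Fin n) (Fin d) ℝ) (V : Matrix (Fin n) (Fin n) ℝ)
    (x : ℕ → Fin d → ℝ) : ℕ → Fin n → ℝ
  | 0 => h0
  | t + 1 => fun k =>
      σ (α k * V.mulVec (mirnnStates σ h0 α β1 β2 b U V x t) k * U.mulVec (x t) k
        + β1 k * V.mulVec (mirnnStates σ h0 α β1 β2 b U V x t) k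
        + β2 k * U.mulVec (x t) k + b k)

/-- The class of functions computed by CPRNNs of rank `R` and hidden size `n`
(mapping the input sequence `x¹,x²,…` to the hidden state sequence `h¹,h²,…`). -/
def HCPRNN (d n R : ℕ) (σ : ℝ → ℝ) : Set ((ℕ → Fin d → ℝ) → ℕ → Fin n → ℝ) :=
  {h | ∃ (h0 : Fin n → ℝ) (A : Matrix (Fin n) (Fin R) ℝ) (B : Matrix (Fin d) (Fin R) ℝ)
      (C : Matrix (Fin n) (Fin R) ℝ) (U : Matrix (Fin n) (Fin d) ℝ)
      (V : Matrix (Fin n) (Fin n) ℝ) (b : Fin n → ℝ),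
      ∀ x t, h x t = cprnnStates σ h0 A B C U V b x (t + 1)}

/-- The class of functions computed by CPBIRNNs of rank `R` and hidden size `n`. -/
def HCPBIRNN (d n R : ℕ) (σ : ℝ → ℝ) : Set ((ℕ → Fin d → ℝ) → ℕ → Fin n → ℝ) :=
  {h | ∃ (h0 : Fin n → ℝ) (A : Matrix (Fin n) (Fin R) ℝ) (B : Matrix (Fin d) (Fin R) ℝ)
      (C : Matrix (Fin n) (Fin R) ℝ),
      ∀ x t, h x t = cpbirnnStates σ h0 A B C x (t + 1)}

/-- The class of functions computed by 2RNNs of hidden size `n`. -/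
def H2RNN (d n : ℕ) (σ : ℝ → ℝ) : Set ((ℕ → Fin d → ℝ) → ℕ → Fin n → ℝ) :=
  {h | ∃ (h0 : Fin n → ℝ) (T : Fin n → Fin d → Fin n → ℝ) (U : Matrix (Fin n) (Fin d) ℝ)
      (V : Matrix (Fin n) (Fin n) ℝ) (b : Fin n → ℝ),
      ∀ x t, h x t = rnn2States σ h0 T U V b x (t + 1)}

/-- The class of functions computed by MIRNNs of hidden size `n`. -/
def HMIRNN (d n : ℕ) (σ : ℝ → ℝ) : Set ((ℕ → Fin d → ℝ) → ℕ → Fin n → ℝ) :=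
  {h | ∃ (h0 α β1 β2 b : Fin n → ℝ) (U : Matrix (Fin n) (Fin d) ℝ)
      (V : Matrix (Fin n) (Fin n) ℝ),
      ∀ x t, h x t = mirnnStates σ h0 α β1 β2 b U V x (t + 1)}

/-- The class `L(n,q) ∘ H_CPBIRNN(R,n)`: CPBIRNNs composed with a linear output map. -/
def LHCPBIRNN (d n q R : ℕ) (σ : ℝ → ℝ) : Set ((ℕ → Fin d → ℝ) → ℕ → Fin q → ℝ) :=
  {f | ∃ (ℓ : (Fin n → ℝ) →ₗ[ℝ] (Fin q → ℝ)) (h : (ℕ → Fin d → ℝ) → ℕ → Fin n → ℝ),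
      h ∈ HCPBIRNN d n R σ ∧ ∀ x t, f x t = ℓ (h x t)}

end

lemma aux_exists_remove {n k : ℕ} (hk : n ≤ k) (b c : Fin (k + 1) → Fin n → ℝ)
    (N : Matrix (Fin n) (Fin n) ℝ) (hN : N = ∑ s, vecMulVec (b s) (c s)) (hdet : N.det ≠ 0) :
    ∃ s, (N - vecMulVec (b s) (c s)).det ≠ 0 := by
  by_contra hcon
  push Not at hcon
  have hu : IsUnit N.det := isUnit_iff_ne_zero.mpr hdet
  have key : ∀ s, (N⁻¹ * vecMulVec (b s) (c s)).trace = 1 := by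
    intro s
    have h1 : N - vecMulVec (b s) (c s)
        = N * (1 + replicateCol Unit (-(N⁻¹ *ᵥ b s)) * replicateRow Unit (c s)) := by
      rw [← vecMulVec_eq, Matrix.mul_add, Matrix.mul_one, mul_vecMulVec, mulVec_neg, mulVec_mulVec,
        Matrix.mul_nonsing_inv _ hu, one_mulVec, neg_vecMulVec, sub_eq_add_neg]
    have h2 := hcon s
    rw [h1, det_mul, det_one_add_replicateCol_mul_replicateRow] at h2
    have h3 := (mul_eq_zero.mp h2).resolve_left hdet
    rw [mul_vecMulVec, trace_vecMulVec, dotProduct_comm]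
    rw [dotProduct_neg] at h3
    linarith
  have hsum : (N⁻¹ * N).trace = (k + 1 : ℕ) := by
    nth_rewrite 2 [hN]
    rw [Matrix.mul_sum, trace_sum, Finset.sum_congr rfl (fun s _ => key s)]
    simp
  rw [Matrix.nonsing_inv_mul _ hu, trace_one, Fintype.card_fin] at hsum
  have : n = k + 1 := by exact_mod_cast hsum
  omega

lemma aux_cprank_le {d1 d2 d3 R : ℕ} (A : Matrix (Fin d1) (Fin R) ℝ) (B : Matrix (Fin d2) (Fin R) ℝ)
    (C : Matrix (Fin d3) (Fin R) ℝ) : cprank (cpT A B C) ≤ R :=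
  Nat.sInf_le ⟨A, B, C, rfl⟩

lemma aux_cprank_remove {d1 d2 d3 k : ℕ} (A : Matrix (Fin d1) (Fin (k + 1)) ℝ)
    (B : Matrix (Fin d2) (Fin (k + 1)) ℝ) (C : Matrix (Fin d3) (Fin (k + 1)) ℝ)
    (h : cprank (cpT A B C) = k + 1) (s : Fin (k + 1)) :
    cprank (cpT (fun i t => A i (s.succAbove t)) (fun i t => B i (s.succAbove t))
      (fun i t => C i (s.succAbove t))) = k := by
  apply le_antisymm (aux_cprank_le _ _ _)
  have hne : {R : ℕ | ∃ (A' : Matrix (Fin d1) (Fin R) ℝ) (B' : Matrix (Fin d2) (Fin R) ℝ)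
    (C' : Matrix (Fin d3) (Fin R) ℝ), cpT (fun i t => A i (s.succAbove t))
      (fun i t => B i (s.succAbove t)) (fun i t => C i (s.succAbove t)) = cpT A' B' C'}.Nonempty :=
    ⟨k, _, _, _, rfl⟩
  obtain ⟨A', B', C', hT⟩ := Nat.sInf_mem hne
  change _ ≤ sInf _
  generalize sInf {R : ℕ | ∃ (A' : Matrix (Fin d1) (Fin R) ℝ) (B' : Matrix (Fin d2) (Fin R) ℝ)
    (C' : Matrix (Fin d3) (Fin R) ℝ), cpT (fun i t => A i (s.succAbove t))
      (fun i t => B i (s.succAbove t)) (fun i t => C i (s.succAbove t)) = cpT A' B' C'} = R' at *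
  have : cpT A B C = cpT (R := R' + 1) (fun i => Fin.cons (A i s) (A' i))
      (fun i => Fin.cons (B i s) (B' i)) (fun i => Fin.cons (C i s) (C' i)) := by
    funext i j l
    have := congrFun (congrFun (congrFun hT i) j) l
    simp only [cpT] at this ⊢
    rw [Fin.sum_univ_succAbove _ s, this, Fin.sum_univ_succ]
    simp
  have h2 := aux_cprank_le (R := R' + 1) (fun i => Fin.cons (A i s) (A' i))
      (fun i => Fin.cons (B i s) (B' i)) (fun i => Fin.cons (C i s) (C' i))
  rw [← this, h] at h2
  omega

lemma aux_rank_eq {n d : ℕ} (M : Matrix (Fin d) (Fin n) ℝ) (e : Fin n → Fin d)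
    (h : (M.submatrix e id).det ≠ 0) : M.rank = n := by
  apply le_antisymm M.rank_le_width
  have h1 := rank_submatrix_le M e id
  rw [rank_of_isUnit _ ((Matrix.isUnit_iff_isUnit_det _).mpr (isUnit_iff_ne_zero.mpr h)),
    Fintype.card_fin] at h1
  exact h1

lemma aux_tanh_tendsto (x : ℝ) :
    Filter.Tendsto (fun ε : ℝ => ε⁻¹ * Real.tanh (ε * x)) (nhdsWithin 0 {0}ᶜ) (nhds x) := by
  have h0 : HasDerivAt Real.tanh 1 (0 * x) := by
    have h := (Real.hasDerivAt_sinh (0 * x)).div (Real.hasDerivAt_cosh (0 * x))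
      (Real.cosh_pos _).ne'
    have he : Real.tanh = Real.sinh / Real.cosh := by
      funext y; simp [Real.tanh_eq_sinh_div_cosh]
    rw [he]
    simpa using h
  have h1 : HasDerivAt (fun ε : ℝ => Real.tanh (ε * x)) x 0 := by
    have h2 : HasDerivAt (fun ε : ℝ => ε * x) x 0 := by
      simpa using (hasDerivAt_id (0 : ℝ)).mul_const x
    have h4 := h0.comp (0 : ℝ) h2
    rw [one_mul] at h4
    exact h4
  have h3 := h1.tendsto_slope_zero
  simpa using h3

lemma aux_tanh_det {n : ℕ} (N : Matrix (Fin n) (Fin n) ℝ) (h : N.det ≠ 0) :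
    ∃ ε : ℝ, ε ≠ 0 ∧ ((ε • N).map Real.tanh).det ≠ 0 := by
  have h1 : Filter.Tendsto (fun ε : ℝ => ε⁻¹ • ((ε • N).map Real.tanh)) (nhdsWithin 0 {0}ᶜ)
      (nhds N) := by
    refine tendsto_pi_nhds.mpr fun i => tendsto_pi_nhds.mpr fun j => ?_
    exact aux_tanh_tendsto (N i j)
  have h2 : Filter.Tendsto (fun ε : ℝ => (ε⁻¹ • ((ε • N).map Real.tanh)).det)
      (nhdsWithin 0 {0}ᶜ) (nhds N.det) :=
    ((Continuous.matrix_det continuous_id).tendsto N).comp h1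
  obtain ⟨ε, hε, hε0⟩ := ((h2.eventually_ne h).and self_mem_nhdsWithin).exists
  refine ⟨ε, hε0, fun h0 => hε ?_⟩
  rw [det_smul, h0, mul_zero]

/-- The chosen square block of the first slice is almost surely invertible. -/
lemma aux_ae_det {n d : ℕ} (e : Fin n → Fin d) (he : Function.Injective e) (i0 : Fin n) :
    ∀ᵐ T : Fin n → Fin d → Fin n → ℝ, (Matrix.of fun a b => T i0 (e a) b).det ≠ 0 := by
  classical
  have i1 : (volume : Measure (Fin n → ℝ)).IsAddHaarMeasure := inferInstance
  have i2 : (volume : Measure (Fin d → Fin n → ℝ)).IsAddHaarMeasure :=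
    Measure.pi.isAddHaarMeasure _
  have i3 : (volume : Measure (Fin n → Fin d → Fin n → ℝ)).IsAddHaarMeasure :=
    Measure.pi.isAddHaarMeasure _
  let E : Fin n → Fin d → Fin n → ℝ := fun _ j k => if j = e k then 1 else 0
  have hcont : Continuous fun T : Fin n → Fin d → Fin n → ℝ =>
      (Matrix.of fun a b => T i0 (e a) b).det := by
    apply Continuous.matrix_det
    refine continuous_pi fun a => continuous_pi fun b => ?_
    simp only [Matrix.of_apply]
    fun_prop
  have hs : MeasurableSet {T : Fin n → Fin d → Fin n → ℝ |
      (Matrix.of fun a b => T i0 (e a) b).det ≠ 0} :=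
    (isOpen_ne_fun hcont continuous_const).measurableSet
  refine ae_mem_of_ae_add_linearMap_mem (LinearMap.toSpanSingleton ℝ _ E) volume volume hs ?_
  intro T
  let p := (-(Matrix.of fun a b => T i0 (e a) b)).charpoly
  have hp : p ≠ 0 := (charpoly_monic _).ne_zero
  have hfin : (p.rootSet ℝ).Finite := Polynomial.rootSet_finite p ℝ
  filter_upwards [hfin.countable.ae_notMem volume] with t ht h0
  apply ht
  rw [Polynomial.mem_rootSet]
  refine ⟨hp, ?_⟩
  rw [Polynomial.coe_aeval_eq_eval, Matrix.eval_charpoly, ← h0]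
  congr 1
  ext a b
  simp [E, Matrix.diagonal_apply, he.eq_iff, add_comm]

lemma aux_descend {n d r : ℕ} (hn : n ≤ r) (e : Fin n → Fin d) (i0 : Fin n) (R : ℕ) (hR : r ≤ R)
    (h : ∃ (A : Matrix (Fin n) (Fin R) ℝ) (B : Matrix (Fin d) (Fin R) ℝ)
      (C : Matrix (Fin n) (Fin R) ℝ), cprank (cpT A B C) = R ∧
      (∑ s, vecMulVec (fun a => A i0 s * B (e a) s) (fun b => C b s)).det ≠ 0) :
    ∃ (A : Matrix (Fin n) (Fin r) ℝ) (B : Matrix (Fin d) (Fin r) ℝ)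
      (C : Matrix (Fin n) (Fin r) ℝ), cprank (cpT A B C) = r ∧
      (∑ s, vecMulVec (fun a => A i0 s * B (e a) s) (fun b => C b s)).det ≠ 0 := by
  induction R, hR using Nat.le_induction with
  | base => exact h
  | succ k hk ih =>
    apply ih
    obtain ⟨A, B, C, hc, hd⟩ := h
    obtain ⟨s, hs⟩ := aux_exists_remove (hn.trans hk) _ _ _ rfl hd
    refine ⟨_, _, _, aux_cprank_remove A B C hc s, ?_⟩
    rw [Fin.sum_univ_succAbove _ s, add_sub_cancel_left] at hs
    exact hs

/-- For all `n ≤ d ≤ r ≤ R_typ-max(n,d,n)`, there exist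
`A, C ∈ ℝ^{n×r}`, `B ∈ ℝ^{d×r}` and `h₀ ∈ ℝ^n` with `rank_CP([[A,B,C]]) = r` and
`rank(B diag(Aᵀh₀) Cᵀ) = rank(tanh(B diag(Aᵀh₀) Cᵀ)) = n`. -/
theorem exists_cp_rank_r_full_rank (n d r : ℕ) (hnd : n ≤ d) (hdr : d ≤ r)
    (hr : r ≤ RtypMax n d n) :
    ∃ (A : Matrix (Fin n) (Fin r) ℝ) (B : Matrix (Fin d) (Fin r) ℝ)
      (C : Matrix (Fin n) (Fin r) ℝ) (h0 : Fin n → ℝ),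
      cprank (cpT A B C) = r ∧
      (B * Matrix.diagonal (Aᵀ.mulVec h0) * Cᵀ).rank = n ∧
      ((B * Matrix.diagonal (Aᵀ.mulVec h0) * Cᵀ).map Real.tanh).rank = n := by
  rcases Nat.eq_zero_or_pos n with rfl | hn
  · have h0 : ∀ T : Fin 0 → Fin d → Fin 0 → ℝ, cprank T = 0 := by
      intro T
      have : T = cpT (R := 0) 0 0 0 := by funext i; exact i.elim0
      rw [this]
      exact Nat.le_zero.mp (aux_cprank_le _ _ _)
    have hr0 : r = 0 := by
      by_contra hr0
      have hpos : RtypMax 0 d 0 ≠ 0 := by omega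
      have hmem : IsTypicalRank 0 d 0 (RtypMax 0 d 0) := by
        refine Nat.sSup_mem (s := {R : ℕ | IsTypicalRank 0 d 0 R}) ?_ ?_
        · by_contra hne
          rw [Set.not_nonempty_iff_eq_empty] at hne
          exact hpos (by simp [RtypMax, hne])
        · by_contra hb
          exact hpos (Nat.sSup_of_not_bddAbove hb)
      obtain ⟨T, hT⟩ := nonempty_of_measure_ne_zero hmem.ne'
      exact hpos (hT.symm.trans (h0 T))
    subst hr0
    refine ⟨0, 0, 0, 0, h0 _, ?_, ?_⟩
    · exact Nat.le_zero.mp (rank_le_width _)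
    · exact Nat.le_zero.mp (rank_le_width _)
  have hpos : RtypMax n d n ≠ 0 := by omega
  have hmem : IsTypicalRank n d n (RtypMax n d n) := by
    refine Nat.sSup_mem (s := {R : ℕ | IsTypicalRank n d n R}) ?_ ?_
    · by_contra hne
      rw [Set.not_nonempty_iff_eq_empty] at hne
      exact hpos (by simp [RtypMax, hne])
    · by_contra hb
      exact hpos (Nat.sSup_of_not_bddAbove hb)
  let i0 : Fin n := ⟨0, hn⟩
  let e : Fin n → Fin d := Fin.castLE hnd
  have hfreq : ∃ᵐ T : Fin n → Fin d → Fin n → ℝ, cprank T = RtypMax n d n :=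
    frequently_ae_iff.mpr hmem.ne'
  obtain ⟨T, hT, hTd⟩ :=
    (hfreq.and_eventually (aux_ae_det e (Fin.castLE_injective hnd) i0)).exists
  have hne : {R : ℕ | ∃ (A : Matrix (Fin n) (Fin R) ℝ) (B : Matrix (Fin d) (Fin R) ℝ)
      (C : Matrix (Fin n) (Fin R) ℝ), T = cpT A B C}.Nonempty := by
    by_contra hne
    rw [Set.not_nonempty_iff_eq_empty] at hne
    exact hpos (by rw [← hT]; simp [cprank, hne])
  have hTm : ∃ (A : Matrix (Fin n) (Fin (cprank T)) ℝ) (B : Matrix (Fin d) (Fin (cprank T)) ℝ)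
      (C : Matrix (Fin n) (Fin (cprank T)) ℝ), T = cpT A B C := Nat.sInf_mem hne
  rw [hT] at hTm
  obtain ⟨A₀, B₀, C₀, hTe⟩ := hTm
  obtain ⟨A, B, C, hc, hd⟩ := aux_descend (hnd.trans hdr) e i0 _ hr ⟨A₀, B₀, C₀, hTe ▸ hT, by
    convert hTd using 2
    ext a b
    simp [hTe, cpT, Matrix.sum_apply, vecMulVec_apply]⟩
  obtain ⟨ε, hε, hdε⟩ := aux_tanh_det _ hd
  have hsub : (B * Matrix.diagonal (Aᵀ.mulVec (Pi.single i0 ε)) * Cᵀ).submatrix e id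
      = ε • ∑ s, vecMulVec (fun a => A i0 s * B (e a) s) (fun b => C b s) := by
    ext a b
    rw [submatrix_apply, Matrix.mul_apply, Matrix.smul_apply, Matrix.sum_apply, smul_eq_mul,
      Finset.mul_sum]
    refine Finset.sum_congr rfl fun s _ => ?_
    rw [Matrix.mul_diagonal]
    simp [vecMulVec_apply]
    ring
  refine ⟨A, B, C, Pi.single i0 ε, hc, aux_rank_eq _ e ?_, aux_rank_eq _ e ?_⟩
  · rw [hsub, det_smul]
    exact mul_ne_zero (pow_ne_zero _ hε) hd
  · rw [← hsub] at hdε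
    exact hdε
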